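/- arXiv:1208.0713 — 2 statements merged into one kernel-verified Lean document; each statement's English description precedes it below -/
import Mathlib

section
/- Let 1 ≤ m ≤ n and let u, v ∈ A*. Then u and v satisfy exactly the same formulas of the fragment uTL^X_{m,n} of unary temporal logic if and only if u and v agree on rankers from uR^X_{m,n}. The analogous statement holds for uTL^Y_{m,n} and uR^Y_{m,n}. -/
namespace RankerPaper

variable {A : Type*} [DecidableEq A]

/-- Letters of rankers: `X a` ("next `a` to the right") and `Y a` ("next `a` to the left"). -/
inductive RLetter (A : Type*) where
  | X : A → RLetter A
  | Y : A → RLetter A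
  deriving DecidableEq

/-- Least `a`-position of `u` strictly greater than `q` (positions are 1-indexed). -/
def nextOcc (u : List A) (a : A) (q : ℕ) : Option ℕ :=
  ((List.range (u.length + 2)).filter (fun i => decide (q < i ∧ u[i-1]? = some a))).head?

/-- Greatest `a`-position of `u` strictly less than `q` (positions are 1-indexed). -/
def prevOcc (u : List A) (a : A) (q : ℕ) : Option ℕ :=
  ((List.range (u.length + 2)).filter
    (fun i => decide (1 ≤ i ∧ i < q ∧ u[i-1]? = some a))).getLast?

/-- One evaluation step of a ranker letter from position `q`. -/
def stepR (u : List A) : RLetter A → ℕ → Option ℕ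
  | .X a, q => nextOcc u a q
  | .Y a, q => prevOcc u a q

/-- Evaluation of a ranker from position `q`, processing letters left to right. -/
def evalFrom (u : List A) : List (RLetter A) → ℕ → Option ℕ
  | [], q => some q
  | z :: r, q => (stepR u z q).bind (evalFrom u r)

/-- Starting position: `0` for an `X`-letter, `|u|+1` for a `Y`-letter. -/
def startPos (u : List A) : RLetter A → ℕ
  | .X _ => 0
  | .Y _ => u.length + 1

/-- The position `r(u)` defined by the ranker `r` on `u` (`none` if undefined;
empty rankers are considered undefined, rankers being nonempty words). -/
def evalR (u : List A) (r : List (RLetter A)) : Option ℕ :=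
  match r with
  | [] => none
  | z :: t => evalFrom u (z :: t) (startPos u z)

/-- `r` is defined on `u`. -/
def Defined (u : List A) (r : List (RLetter A)) : Prop := (evalR u r).isSome

/-- The position `r(u)` (defaulting to `0` when undefined). -/
def pos (u : List A) (r : List (RLetter A)) : ℕ := (evalR u r).getD 0

/-- Do two ranker letters have the same direction? -/
def sameDir : RLetter A → RLetter A → Bool
  | .X _, .X _ => true
  | .Y _, .Y _ => true
  | _, _ => false

/-- Number of (alternating) blocks of a ranker. -/
def numBlocks : List (RLetter A) → ℕ
  | [] => 0
  | [_] => 1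
  | z :: w :: t => (if sameDir z w then 0 else 1) + numBlocks (w :: t)

def startsX (r : List (RLetter A)) : Prop := ∃ a t, r = RLetter.X a :: t
def startsY (r : List (RLetter A)) : Prop := ∃ a t, r = RLetter.Y a :: t
def endsX (r : List (RLetter A)) : Prop := ∃ a, r.getLast? = some (RLetter.X a)
def endsY (r : List (RLetter A)) : Prop := ∃ a, r.getLast? = some (RLetter.Y a)

/-- `R^X_{m,n}`: rankers with exactly `m` blocks, depth `n`, starting with an `X`-block. -/
def RX (m n : ℕ) (r : List (RLetter A)) : Prop :=
  numBlocks r = m ∧ r.length = n ∧ startsX r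

/-- `R^Y_{m,n}`: rankers with exactly `m` blocks, depth `n`, starting with a `Y`-block. -/
def RY (m n : ℕ) (r : List (RLetter A)) : Prop :=
  numBlocks r = m ∧ r.length = n ∧ startsY r

/-- `uR^X_{m,n}`. -/
def uRX (m n : ℕ) (r : List (RLetter A)) : Prop :=
  (∃ m' n', m' ≤ m ∧ n' ≤ n ∧ RX m' n' r) ∨ (∃ m' n', m' < m ∧ n' < n ∧ RY m' n' r)

/-- `uR^Y_{m,n}`. -/
def uRY (m n : ℕ) (r : List (RLetter A)) : Prop :=
  (∃ m' n', m' ≤ m ∧ n' ≤ n ∧ RY m' n' r) ∨ (∃ m' n', m' < m ∧ n' < n ∧ RX m' n' r)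

/-- `uR_{m,n} = uR^X_{m,n} ∪ uR^Y_{m,n}`. -/
def uR (m n : ℕ) (r : List (RLetter A)) : Prop := uRX m n r ∨ uRY m n r

/-- `uR^X_m = ∪_{n ≥ m} uR^X_{m,n}`. -/
def uRXm (m : ℕ) (r : List (RLetter A)) : Prop := ∃ n, m ≤ n ∧ uRX m n r

/-- `uR^Y_m = ∪_{n ≥ m} uR^Y_{m,n}`. -/
def uRYm (m : ℕ) (r : List (RLetter A)) : Prop := ∃ n, m ≤ n ∧ uRY m n r

/-- `r = Z₁ ⋯ Z_n` is condensed on `u`: it is defined on `u` and there is a chain of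
open intervals `(0;|u|+1) = (i₀;j₀) ⊃ (i₁;j₁) ⊃ ⋯ ⊃ (i_{n-1};j_{n-1}) ∋ r(u)`
updated according to the pairs `Z_ℓ Z_{ℓ+1}`. -/
def Condensed (u : List A) (r : List (RLetter A)) : Prop :=
  ∃ (p : ℕ) (i j : ℕ → ℕ),
    evalR u r = some p ∧
    i 0 = 0 ∧ j 0 = u.length + 1 ∧
    (∀ ℓ a b, 1 ≤ ℓ → r[ℓ-1]? = some (RLetter.X a) → r[ℓ]? = some (RLetter.X b) →
        nextOcc u a (i (ℓ-1)) = some (i ℓ) ∧ j ℓ = j (ℓ-1)) ∧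
    (∀ ℓ a b, 1 ≤ ℓ → r[ℓ-1]? = some (RLetter.Y a) → r[ℓ]? = some (RLetter.Y b) →
        i ℓ = i (ℓ-1) ∧ prevOcc u a (j (ℓ-1)) = some (j ℓ)) ∧
    (∀ ℓ a b, 1 ≤ ℓ → r[ℓ-1]? = some (RLetter.X a) → r[ℓ]? = some (RLetter.Y b) →
        i ℓ = i (ℓ-1) ∧ nextOcc u a (i (ℓ-1)) = some (j ℓ)) ∧
    (∀ ℓ a b, 1 ≤ ℓ → r[ℓ-1]? = some (RLetter.Y a) → r[ℓ]? = some (RLetter.X b) →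
        prevOcc u a (j (ℓ-1)) = some (i ℓ) ∧ j ℓ = j (ℓ-1)) ∧
    (∀ ℓ, 1 ≤ ℓ → ℓ < r.length →
        i (ℓ-1) ≤ i ℓ ∧ j ℓ ≤ j (ℓ-1) ∧ (i (ℓ-1) < i ℓ ∨ j ℓ < j (ℓ-1))) ∧
    i (r.length - 1) < p ∧ p < j (r.length - 1)

/-- `u` and `v` agree on rankers from the set `R`. -/
def AgreeDef (R : List (RLetter A) → Prop) (u v : List A) : Prop :=
  ∀ r, R r → (Defined u r ↔ Defined v r)

/-- `u` and `v` agree on condensed rankers from the set `R`. -/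
def AgreeCond (R : List (RLetter A) → Prop) (u v : List A) : Prop :=
  ∀ r, R r → (Condensed u r ↔ Condensed v r)

/-- `u ⊳_{m,n} v`. -/
def trir (m n : ℕ) (u v : List A) : Prop := AgreeCond (uRX m n) u v

/-- `u ⊲_{m,n} v`. -/
def tril (m n : ℕ) (u v : List A) : Prop := AgreeCond (uRY m n) u v

/-- The alphabet (set of letters) of a word. -/
def alph (u : List A) : Finset A := u.toFinset

/-- Condition (WI 1). -/
def WI1 (m n : ℕ) (u v : List A) : Prop := AgreeDef (uR m n) u v

/-- Condition (WI 2). -/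
def WI2 (m n : ℕ) (u v : List A) : Prop :=
  ∀ r r', uR m n r → uR (m-1) (n-1) r' →
    Defined u r → Defined v r → Defined u r' → Defined v r' →
    compare (pos u r) (pos u r') = compare (pos v r) (pos v r')

/-- Condition (WI 3). -/
def WI3 (m n : ℕ) (u v : List A) : Prop :=
  ∀ r r', uR m n r → uR m (n-1) r' →
    ((endsX r ∧ endsY r') ∨ (endsY r ∧ endsX r')) →
    Defined u r → Defined v r → Defined u r' → Defined v r' →
    compare (pos u r) (pos u r') = compare (pos v r) (pos v r')

/-- Condition (WI 1c). -/
def WI1c (m n : ℕ) (u v : List A) : Prop := AgreeCond (uR m n) u v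

/-- Condition (WI 2c). -/
def WI2c (m n : ℕ) (u v : List A) : Prop :=
  ∀ r r', uR m n r → uR (m-1) (n-1) r' →
    Condensed u r → Condensed v r → Condensed u r' → Condensed v r' →
    compare (pos u r) (pos u r') = compare (pos v r) (pos v r')

/-- Condition (WI 3c). -/
def WI3c (m n : ℕ) (u v : List A) : Prop :=
  ∀ r r', uR m n r → uR m (n-1) r' →
    ((endsX r ∧ endsY r') ∨ (endsY r ∧ endsX r')) →
    Condensed u r → Condensed v r → Condensed u r' → Condensed v r' →
    compare (pos u r) (pos u r') = compare (pos v r) (pos v r')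


/-- Formulas of unary temporal logic `TL`. -/
inductive TL (A : Type*) where
  | top : TL A
  | and : TL A → TL A → TL A
  | or : TL A → TL A → TL A
  | not : TL A → TL A
  | Xm : A → TL A → TL A
  | Ym : A → TL A → TL A

/-- Satisfaction of a `TL`-formula at a position `0 ≤ i ≤ |u|+1` of `u`. -/
def satAt (u : List A) : TL A → ℕ → Prop
  | .top, _ => True
  | .and φ ψ, i => satAt u φ i ∧ satAt u ψ i
  | .or φ ψ, i => satAt u φ i ∨ satAt u ψ i
  | .not φ, i => ¬ satAt u φ i
  | .Xm a φ, i => ∃ p, nextOcc u a i = some p ∧ satAt u φ p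
  | .Ym a φ, i => ∃ p, prevOcc u a i = some p ∧ satAt u φ p

/-- Satisfaction of a `TL`-formula by a word. -/
def sat (u : List A) : TL A → Prop
  | .top => True
  | .and φ ψ => sat u φ ∧ sat u ψ
  | .or φ ψ => sat u φ ∨ sat u ψ
  | .not φ => ¬ sat u φ
  | .Xm a φ => satAt u (.Xm a φ) 0
  | .Ym a φ => satAt u (.Ym a φ) (u.length + 1)

/-- The sequences of modal operators along root-to-leaf branches of the parsing tree. -/
def branches : TL A → List (List (RLetter A))
  | .top => [[]]
  | .and φ ψ => branches φ ++ branches ψ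
  | .or φ ψ => branches φ ++ branches ψ
  | .not φ => branches φ
  | .Xm a φ => (branches φ).map (fun b => RLetter.X a :: b)
  | .Ym a φ => (branches φ).map (fun b => RLetter.Y a :: b)

/-- The fragment `uTL^X_{m,n}`: every branch's modal sequence, viewed as a ranker,
is empty or belongs to `uR^X_{m,n}`. -/
def inTLX (m n : ℕ) (φ : TL A) : Prop :=
  ∀ b ∈ branches φ, b = [] ∨ uRX m n b

/-- The fragment `uTL^Y_{m,n}`. -/
def inTLY (m n : ℕ) (φ : TL A) : Prop :=
  ∀ b ∈ branches φ, b = [] ∨ uRY m n b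

/-!
A modality moves to a uniquely determined position, if it moves at all. Hence it distributes over
`∧` and `∨`, while `X_a ¬φ` is equivalent to `X_a ⊤ ∧ ¬ X_a φ`. So the truth of a formula is
determined by which prefixes of its branches, read as rankers, are defined, and the nonempty ones
stay in the fragment because cutting off the end of a ranker raises neither its depth nor its number
of blocks. Conversely, the definedness of a ranker is expressed by a formula with a single branch.
-/

/-- The modality `X_a` or `Y_a` named by a ranker letter, so that the two directions can be
treated at once. -/
def TL.modal : RLetter A → TL A → TL A
  | .X a => .Xm a
  | .Y a => .Ym a

/-- The formula `Z₁ ⋯ Z_n ⊤` that expresses that the ranker `Z₁ ⋯ Z_n` is defined. -/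
def TL.ofRanker (r : List (RLetter A)) : TL A := r.foldr TL.modal .top

/-- `r` is a prefix, possibly empty, of the modal sequence along some branch of `φ`; definedness
of these `r` is all the information about a word that `φ` can see. -/
def IsBranchPrefix (φ : TL A) (r : List (RLetter A)) : Prop := ∃ b ∈ branches φ, r <+: b

/-- A set of rankers closed under prefixes. The empty word is not required to belong to it, since
rankers are nonempty. -/
def PrefixClosed (R : List (RLetter A) → Prop) : Prop := ∀ ⦃r b⦄, r ≠ [] → r <+: b → R b → R r

section Branches

omit [DecidableEq A]

@[elab_as_elim]
theorem TL.modalInduction {motive : TL A → Prop} (top : motive .top)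
    (and : ∀ φ ψ, motive φ → motive ψ → motive (.and φ ψ))
    (or : ∀ φ ψ, motive φ → motive ψ → motive (.or φ ψ))
    (not : ∀ φ, motive φ → motive (.not φ))
    (modal : ∀ z φ, motive φ → motive (.modal z φ)) (φ : TL A) : motive φ := by
  induction φ with
  | top => exact top
  | and φ ψ hφ hψ => exact and φ ψ hφ hψ
  | or φ ψ hφ hψ => exact or φ ψ hφ hψ
  | not φ hφ => exact not φ hφ
  | Xm a φ hφ => exact modal (.X a) φ hφ
  | Ym a φ hφ => exact modal (.Y a) φ hφ

theorem branches_modal (z : RLetter A) (φ : TL A) :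
    branches (.modal z φ) = (branches φ).map (z :: ·) := by
  cases z <;> rfl

theorem branches_ne_nil (φ : TL A) : branches φ ≠ [] := by
  induction φ using TL.modalInduction with
  | top => exact List.cons_ne_nil _ _
  | and φ ψ hφ _ => exact List.append_ne_nil_of_left_ne_nil hφ _
  | or φ ψ hφ _ => exact List.append_ne_nil_of_left_ne_nil hφ _
  | not _ hφ => exact hφ
  | modal z φ hφ => simpa only [branches_modal, ne_eq, List.map_eq_nil_iff] using hφ

theorem branches_ofRanker (r : List (RLetter A)) : branches (.ofRanker r) = [r] := by
  induction r with
  | nil => rfl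
  | cons z r ih =>
    change branches (.modal z (.ofRanker r)) = [z :: r]
    rw [branches_modal, ih, List.map_singleton]

theorem isBranchPrefix_and_iff {φ ψ : TL A} {r : List (RLetter A)} :
    IsBranchPrefix (.and φ ψ) r ↔ IsBranchPrefix φ r ∨ IsBranchPrefix ψ r := by
  simp only [IsBranchPrefix, branches, List.mem_append, or_and_right, exists_or]

theorem isBranchPrefix_or_iff {φ ψ : TL A} {r : List (RLetter A)} :
    IsBranchPrefix (.or φ ψ) r ↔ IsBranchPrefix φ r ∨ IsBranchPrefix ψ r := by
  simp only [IsBranchPrefix, branches, List.mem_append, or_and_right, exists_or]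

theorem isBranchPrefix_nil (φ : TL A) : IsBranchPrefix φ [] :=
  let ⟨b, hb⟩ := List.exists_mem_of_ne_nil _ (branches_ne_nil φ)
  ⟨b, hb, List.nil_prefix⟩

theorem isBranchPrefix_modal_iff {z : RLetter A} {φ : TL A} {r : List (RLetter A)} :
    IsBranchPrefix (.modal z φ) r ↔ r = [] ∨ ∃ s, r = z :: s ∧ IsBranchPrefix φ s := by
  constructor
  · rintro ⟨b, hb, hrb⟩
    obtain ⟨c, hc, rfl⟩ := List.mem_map.1 (branches_modal z φ ▸ hb)
    exact (List.prefix_cons_iff.1 hrb).imp_right fun ⟨s, hs, hsc⟩ => ⟨s, hs, c, hc, hsc⟩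
  · rintro (rfl | ⟨s, rfl, c, hc, hsc⟩)
    · exact isBranchPrefix_nil _
    · refine ⟨z :: c, ?_, List.cons_prefix_cons.2 ⟨rfl, hsc⟩⟩
      rw [branches_modal]
      exact List.mem_map_of_mem hc

end Branches

theorem satAt_modal_iff {u : List A} {z : RLetter A} {φ : TL A} {i : ℕ} :
    satAt u (.modal z φ) i ↔ ∃ p, stepR u z i = some p ∧ satAt u φ p := by
  cases z <;> rfl

theorem sat_modal_iff {u : List A} {z : RLetter A} {φ : TL A} :
    sat u (.modal z φ) ↔ satAt u (.modal z φ) (startPos u z) := by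
  cases z <;> rfl

theorem evalFrom_cons_isSome_iff {u : List A} {z : RLetter A} {r : List (RLetter A)} {i : ℕ} :
    (evalFrom u (z :: r) i).isSome ↔ ∃ p, stepR u z i = some p ∧ (evalFrom u r p).isSome := by
  simp only [evalFrom, Option.isSome_bind, Option.any_eq_true]

theorem satAt_ofRanker_iff {u : List A} {r : List (RLetter A)} {i : ℕ} :
    satAt u (.ofRanker r) i ↔ (evalFrom u r i).isSome := by
  induction r generalizing i with
  | nil => exact iff_of_true trivial rfl
  | cons z r ih =>
    change satAt u (.modal z (.ofRanker r)) i ↔ _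
    simp only [satAt_modal_iff, evalFrom_cons_isSome_iff, ih]

theorem sat_ofRanker_iff {u : List A} {r : List (RLetter A)} (hr : r ≠ []) :
    sat u (.ofRanker r) ↔ Defined u r := by
  obtain ⟨z, t, rfl⟩ := List.exists_cons_of_ne_nil hr
  exact sat_modal_iff.trans (satAt_ofRanker_iff (r := z :: t))

theorem satAt_modal_congr {u v : List A} {z : RLetter A} {φ : TL A} {i j : ℕ}
    (hstep : (stepR u z i).isSome ↔ (stepR v z j).isSome)
    (hφ : ∀ p q, stepR u z i = some p → stepR v z j = some q → (satAt u φ p ↔ satAt v φ q)) :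
    satAt u (.modal z φ) i ↔ satAt v (.modal z φ) j := by
  rw [satAt_modal_iff, satAt_modal_iff]
  cases hu : stepR u z i <;> cases hv : stepR v z j <;> simp_all

theorem satAt_congr {u v : List A} {φ : TL A} {i j : ℕ}
    (h : ∀ r, IsBranchPrefix φ r → ((evalFrom u r i).isSome ↔ (evalFrom v r j).isSome)) :
    satAt u φ i ↔ satAt v φ j := by
  induction φ using TL.modalInduction generalizing i j with
  | top => exact Iff.rfl
  | and φ ψ ihφ ihψ =>
    exact and_congr (ihφ fun r hr => h r (isBranchPrefix_and_iff.2 (.inl hr)))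
      (ihψ fun r hr => h r (isBranchPrefix_and_iff.2 (.inr hr)))
  | or φ ψ ihφ ihψ =>
    exact or_congr (ihφ fun r hr => h r (isBranchPrefix_or_iff.2 (.inl hr)))
      (ihψ fun r hr => h r (isBranchPrefix_or_iff.2 (.inr hr)))
  | not φ ih => exact not_congr (ih h)
  | modal z φ ih =>
    refine satAt_modal_congr ?_ fun p q hp hq => ih fun s hs => ?_
    · have hz : IsBranchPrefix (.modal z φ) [z] :=
        isBranchPrefix_modal_iff.2 (.inr ⟨[], rfl, isBranchPrefix_nil φ⟩)
      simpa only [evalFrom, Option.bind_fun_some] using h [z] hz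
    · have hzs : IsBranchPrefix (.modal z φ) (z :: s) :=
        isBranchPrefix_modal_iff.2 (.inr ⟨s, rfl, hs⟩)
      simpa only [evalFrom, hp, hq, Option.bind_some] using h (z :: s) hzs

theorem sat_congr {u v : List A} {φ : TL A} (h : AgreeDef (IsBranchPrefix φ) u v) :
    sat u φ ↔ sat v φ := by
  induction φ using TL.modalInduction with
  | top => exact Iff.rfl
  | and φ ψ ihφ ihψ =>
    exact and_congr (ihφ fun r hr => h r (isBranchPrefix_and_iff.2 (.inl hr)))
      (ihψ fun r hr => h r (isBranchPrefix_and_iff.2 (.inr hr)))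
  | or φ ψ ihφ ihψ =>
    exact or_congr (ihφ fun r hr => h r (isBranchPrefix_or_iff.2 (.inl hr)))
      (ihψ fun r hr => h r (isBranchPrefix_or_iff.2 (.inr hr)))
  | not φ ih => exact not_congr (ih h)
  | modal z φ _ =>
    rw [sat_modal_iff, sat_modal_iff]
    refine satAt_congr fun r hr => ?_
    rcases isBranchPrefix_modal_iff.1 hr with rfl | ⟨s, rfl, -⟩
    · exact Iff.rfl
    · exact h (z :: s) hr

section Fragments

omit [DecidableEq A]

theorem one_le_numBlocks_cons (z : RLetter A) (r : List (RLetter A)) :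
    1 ≤ numBlocks (z :: r) := by
  induction r generalizing z with
  | nil => exact le_rfl
  | cons w r ih => exact le_add_left (ih w)

theorem numBlocks_le_numBlocks_append (r s : List (RLetter A)) :
    numBlocks r ≤ numBlocks (r ++ s) := by
  fun_induction numBlocks r with
  | case1 => exact Nat.zero_le _
  | case2 z => exact one_le_numBlocks_cons z s
  | case3 z w t ih => exact Nat.add_le_add_left ih _

theorem numBlocks_le_of_prefix {r b : List (RLetter A)} (h : r <+: b) :
    numBlocks r ≤ numBlocks b := by
  obtain ⟨s, rfl⟩ := h
  exact numBlocks_le_numBlocks_append r s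

theorem prefixClosed_startsX : PrefixClosed (startsX (A := A)) := by
  rintro r _ hne hrb ⟨a, t, rfl⟩
  obtain ⟨s, rfl, -⟩ := (List.prefix_cons_iff.1 hrb).resolve_left hne
  exact ⟨a, s, rfl⟩

theorem prefixClosed_startsY : PrefixClosed (startsY (A := A)) := by
  rintro r _ hne hrb ⟨a, t, rfl⟩
  obtain ⟨s, rfl, -⟩ := (List.prefix_cons_iff.1 hrb).resolve_left hne
  exact ⟨a, s, rfl⟩

theorem PrefixClosed.bounded_or_strictlyBounded {S T : List (RLetter A) → Prop}
    (hS : PrefixClosed S) (hT : PrefixClosed T) (m n : ℕ) :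
    PrefixClosed fun r =>
      (numBlocks r ≤ m ∧ r.length ≤ n ∧ S r) ∨ (numBlocks r < m ∧ r.length < n ∧ T r) := by
  rintro r b hne hrb (⟨hm, hn, hb⟩ | ⟨hm, hn, hb⟩)
  · exact .inl ⟨(numBlocks_le_of_prefix hrb).trans hm, hrb.length_le.trans hn, hS hne hrb hb⟩
  · exact .inr ⟨(numBlocks_le_of_prefix hrb).trans_lt hm, hrb.length_le.trans_lt hn, hT hne hrb hb⟩

theorem uRX_iff {m n : ℕ} {r : List (RLetter A)} :
    uRX m n r ↔
      (numBlocks r ≤ m ∧ r.length ≤ n ∧ startsX r) ∨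
        (numBlocks r < m ∧ r.length < n ∧ startsY r) := by
  simp [uRX, RX, RY]

theorem uRY_iff {m n : ℕ} {r : List (RLetter A)} :
    uRY m n r ↔
      (numBlocks r ≤ m ∧ r.length ≤ n ∧ startsY r) ∨
        (numBlocks r < m ∧ r.length < n ∧ startsX r) := by
  simp [uRY, RX, RY]

theorem prefixClosed_uRX (m n : ℕ) : PrefixClosed (uRX (A := A) m n) := by
  simpa only [PrefixClosed, uRX_iff] using
    prefixClosed_startsX.bounded_or_strictlyBounded prefixClosed_startsY m n

theorem prefixClosed_uRY (m n : ℕ) : PrefixClosed (uRY (A := A) m n) := by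
  simpa only [PrefixClosed, uRY_iff] using
    prefixClosed_startsY.bounded_or_strictlyBounded prefixClosed_startsX m n

end Fragments

theorem statement0_general {R : List (RLetter A) → Prop} (hR : PrefixClosed R) (u v : List A) :
    (∀ φ : TL A, (∀ b ∈ branches φ, b = [] ∨ R b) → (sat u φ ↔ sat v φ)) ↔ AgreeDef R u v := by
  constructor
  · intro hsat r hr
    obtain rfl | hne := eq_or_ne r []
    · exact Iff.rfl
    rw [← sat_ofRanker_iff hne, ← sat_ofRanker_iff hne]
    refine hsat _ fun b hb => .inr ?_
    rw [branches_ofRanker, List.mem_singleton] at hb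
    exact hb ▸ hr
  · intro hagree φ hφ
    refine sat_congr fun r ⟨b, hb, hrb⟩ => ?_
    obtain rfl | hne := eq_or_ne r []
    · exact Iff.rfl
    have hRb : R b := (hφ b hb).resolve_left (hrb.ne_nil hne)
    exact hagree r (hR hne hrb hRb)

/-- For `1 ≤ m ≤ n`, two words satisfy the same `uTL^X_{m,n}`-formulas
iff they agree on rankers from `uR^X_{m,n}`; likewise for `Y`. -/
theorem statement0 (m n : ℕ) (hm : 1 ≤ m) (hmn : m ≤ n) (u v : List A) :
    ((∀ φ : TL A, inTLX m n φ → (sat u φ ↔ sat v φ)) ↔ AgreeDef (uRX m n) u v) ∧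
    ((∀ φ : TL A, inTLY m n φ → (sat u φ ↔ sat v φ)) ↔ AgreeDef (uRY m n) u v) :=
  ⟨statement0_general (prefixClosed_uRX m n) u v, statement0_general (prefixClosed_uRY m n) u v⟩

end RankerPaper
end

section
/- Let s be a ranker, a ∈ A, and r = X_a s. Let u ∈ A+ with a ∈ alph(u), and let u = u_- a u_+ be its a-left factorization. Then r is condensed on u if and only if: s is condensed on u_+, in case s starts with an X-letter; and s is condensed on u_-, in case s starts with a Y-letter. Dually, if r = Y_a s and u = u_- a u_+ is the a-right factorization of u, then r is condensed on u if and only if: s is condensed on u_-, in case s starts with a Y-letter; and s is condensed on u_+, in case s starts with an X-letter. -/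
namespace RankerPaper

variable {A : Type*} [DecidableEq A]

/-!
A condensed ranker performs a search in shrinking intervals: each letter looks for the first
(`X a`) or last (`Y a`) `a`-position of the current open interval, and the next letter decides
which of the two sides of that position is kept. Started on an arbitrary interval, this search
satisfies a one-step recursion, and it only sees the factor of the word inside the interval. The
letter `a` of an `a`-left factorization `u₋ a u₊` is the first one found by `X a`, so the search
continues in `u₊` or in `u₋` according to the direction of the second letter of the ranker.
-/

theorem find?_reverse_range_eq_some {n k : ℕ} {p : ℕ → Bool} :
    (List.range n).reverse.find? p = some k ↔ k < n ∧ p k ∧ ∀ m, k < m → m < n → !p m := by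
  induction n with
  | zero => simp
  | succ n ih => grind [List.range_succ]

theorem nextOcc_eq_some_iff {u : List A} {a : A} {q k : ℕ} :
    nextOcc u a q = some k ↔
      q < k ∧ u[k - 1]? = some a ∧ ∀ m ∈ Set.Ioo q k, u[m - 1]? ≠ some a := by
  rw [nextOcc, List.head?_filter, List.find?_range_eq_some]
  grind

theorem prevOcc_eq_some_iff {u : List A} {a : A} {q k : ℕ} :
    prevOcc u a q = some k ↔
      1 ≤ k ∧ k < q ∧ u[k - 1]? = some a ∧ ∀ m ∈ Set.Ioo k q, u[m - 1]? ≠ some a := by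
  rw [prevOcc, List.getLast?_filter, find?_reverse_range_eq_some]
  grind

namespace RLetter

/-- The endpoint of the open interval `I` (given by its two endpoints) from which a letter
searches: the left one for an `X`-letter, the right one for a `Y`-letter. -/
def origin : RLetter A → ℕ × ℕ → ℕ
  | .X _, I => I.1
  | .Y _, I => I.2

/-- The part of the open interval `I` beyond the position `k` in the search direction of the
letter. In the chain defining `Condensed` this is how the letter `Z_{ℓ+1}` cuts the interval
`(i_{ℓ-1};j_{ℓ-1})` at the position found by `Z_ℓ`. -/
def beyond : RLetter A → ℕ × ℕ → ℕ → ℕ × ℕ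
  | .X _, I, k => (k, I.2)
  | .Y _, I, k => (I.1, k)

omit [DecidableEq A]

theorem origin_beyond (z : RLetter A) (I : ℕ × ℕ) (k : ℕ) : z.origin (z.beyond I k) = k := by
  cases z <;> rfl

theorem beyond_add (z : RLetter A) (I : ℕ × ℕ) (k n : ℕ) :
    z.beyond (I + (n, n)) (k + n) = z.beyond I k + (n, n) := by
  cases z <;> rfl

end RLetter

/-- Strict inclusion `J ⊂ I` of open intervals, in terms of their endpoints as in `Condensed`. -/
def StrictlyInside (J I : ℕ × ℕ) : Prop :=
  I.1 ≤ J.1 ∧ J.2 ≤ I.2 ∧ (I.1 < J.1 ∨ J.2 < I.2)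

omit [DecidableEq A] in
theorem mem_Ioo_iff_strictlyInside_beyond (w : RLetter A) {I : ℕ × ℕ} {k : ℕ} :
    k ∈ Set.Ioo I.1 I.2 ↔
      StrictlyInside (w.beyond I k) I ∧ (w.beyond I k).1 < (w.beyond I k).2 := by
  cases w <;> simp only [StrictlyInside, RLetter.beyond, Set.mem_Ioo] <;> omega

/-- The letter `z` finds the position `k` inside the open interval `I`: for `z = X a` this is the
first `a`-position of `I`, for `z = Y a` the last one. -/
def FindsIn (u : List A) (z : RLetter A) (I : ℕ × ℕ) (k : ℕ) : Prop :=
  stepR u z (z.origin I) = some k ∧ k ∈ Set.Ioo I.1 I.2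

/-- `I 0, I 1, …` satisfies the conditions that `Condensed` imposes on consecutive intervals of
the chain of the ranker `r`, without prescribing the initial interval `I 0`. -/
def IsIntervalChain (u : List A) (r : List (RLetter A)) (I : ℕ → ℕ × ℕ) : Prop :=
  ∀ l z w, r[l]? = some z → r[l + 1]? = some w →
    (∃ k, stepR u z (z.origin (I l)) = some k ∧ I (l + 1) = w.beyond (I l) k) ∧
      StrictlyInside (I (l + 1)) (I l)

theorem isIntervalChain_singleton (u : List A) (z : RLetter A) (I : ℕ → ℕ × ℕ) :
    IsIntervalChain u [z] I := by
  simp [IsIntervalChain]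

theorem isIntervalChain_cons_cons {u : List A} {z w : RLetter A} {t : List (RLetter A)}
    {I : ℕ → ℕ × ℕ} :
    IsIntervalChain u (z :: w :: t) I ↔
      ((∃ k, stepR u z (z.origin (I 0)) = some k ∧ I 1 = w.beyond (I 0) k) ∧
        StrictlyInside (I 1) (I 0)) ∧ IsIntervalChain u (w :: t) fun l => I (l + 1) := by
  rw [IsIntervalChain, ← Nat.and_forall_add_one]
  simp [IsIntervalChain]

/-- The value of the ranker `r` on `u` when its first letter searches from the corresponding
endpoint of `I` instead of the beginning or the end of `u`. -/
def evalIn (u : List A) (r : List (RLetter A)) (I : ℕ × ℕ) : Option ℕ :=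
  match r with
  | [] => none
  | z :: t => evalFrom u (z :: t) (z.origin I)

theorem evalIn_singleton (u : List A) (z : RLetter A) (I : ℕ × ℕ) :
    evalIn u [z] I = stepR u z (z.origin I) :=
  Option.bind_fun_some _

theorem evalIn_cons_cons (u : List A) (z w : RLetter A) (t : List (RLetter A)) (I : ℕ × ℕ) :
    evalIn u (z :: w :: t) I =
      (stepR u z (z.origin I)).bind fun k => evalIn u (w :: t) (w.beyond I k) := by
  simp only [evalIn, RLetter.origin_beyond]
  rfl

theorem evalR_eq_evalIn (u : List A) (r : List (RLetter A)) :
    evalR u r = evalIn u r (0, u.length + 1) := by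
  rcases r with _ | ⟨_ | _, _⟩ <;> rfl

/-- `r` is condensed on `u` relative to the open interval `I₀`: the chain in the definition of
`Condensed` starts with `I₀` instead of `(0;|u|+1)`. -/
def CondensedIn (u : List A) (r : List (RLetter A)) (I₀ : ℕ × ℕ) : Prop :=
  ∃ p I, evalIn u r I₀ = some p ∧ I 0 = I₀ ∧ IsIntervalChain u r I ∧
    p ∈ Set.Ioo (I (r.length - 1)).1 (I (r.length - 1)).2

theorem isIntervalChain_iff {u : List A} {r : List (RLetter A)} {i j : ℕ → ℕ} :
    IsIntervalChain u r (fun l => (i l, j l)) ↔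
      (∀ ℓ a b, 1 ≤ ℓ → r[ℓ-1]? = some (RLetter.X a) → r[ℓ]? = some (RLetter.X b) →
          nextOcc u a (i (ℓ-1)) = some (i ℓ) ∧ j ℓ = j (ℓ-1)) ∧
      (∀ ℓ a b, 1 ≤ ℓ → r[ℓ-1]? = some (RLetter.Y a) → r[ℓ]? = some (RLetter.Y b) →
          i ℓ = i (ℓ-1) ∧ prevOcc u a (j (ℓ-1)) = some (j ℓ)) ∧
      (∀ ℓ a b, 1 ≤ ℓ → r[ℓ-1]? = some (RLetter.X a) → r[ℓ]? = some (RLetter.Y b) →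
          i ℓ = i (ℓ-1) ∧ nextOcc u a (i (ℓ-1)) = some (j ℓ)) ∧
      (∀ ℓ a b, 1 ≤ ℓ → r[ℓ-1]? = some (RLetter.Y a) → r[ℓ]? = some (RLetter.X b) →
          prevOcc u a (j (ℓ-1)) = some (i ℓ) ∧ j ℓ = j (ℓ-1)) ∧
      (∀ ℓ, 1 ≤ ℓ → ℓ < r.length →
          i (ℓ-1) ≤ i ℓ ∧ j ℓ ≤ j (ℓ-1) ∧ (i (ℓ-1) < i ℓ ∨ j ℓ < j (ℓ-1))) := by
  constructor
  · intro h
    have step : ∀ ℓ z w, 1 ≤ ℓ → r[ℓ-1]? = some z → r[ℓ]? = some w → ∃ k,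
        stepR u z (z.origin (i (ℓ-1), j (ℓ-1))) = some k ∧
          i ℓ = (w.beyond (i (ℓ-1), j (ℓ-1)) k).1 ∧ j ℓ = (w.beyond (i (ℓ-1), j (ℓ-1)) k).2 := by
      rintro (_ | l) z w hℓ hz hw
      · omega
      · obtain ⟨⟨k, hk, hI⟩, -⟩ := h l z w hz hw
        exact ⟨k, hk, Prod.ext_iff.1 hI⟩
    refine ⟨fun ℓ a b hℓ hz hw => ?_, fun ℓ a b hℓ hz hw => ?_, fun ℓ a b hℓ hz hw => ?_,
      fun ℓ a b hℓ hz hw => ?_, ?_⟩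
    · obtain ⟨k, hk, hi, hj⟩ := step ℓ _ _ hℓ hz hw
      exact ⟨hi ▸ hk, hj⟩
    · obtain ⟨k, hk, hi, hj⟩ := step ℓ _ _ hℓ hz hw
      exact ⟨hi, hj ▸ hk⟩
    · obtain ⟨k, hk, hi, hj⟩ := step ℓ _ _ hℓ hz hw
      exact ⟨hi, hj ▸ hk⟩
    · obtain ⟨k, hk, hi, hj⟩ := step ℓ _ _ hℓ hz hw
      exact ⟨hi ▸ hk, hj⟩
    · rintro (_ | l) hℓ hlen
      · omega
      · exact (h l _ _ (List.getElem?_eq_getElem (by omega)) (List.getElem?_eq_getElem hlen)).2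
  · rintro ⟨hXX, hYY, hXY, hYX, hnest⟩ l z w hz hw
    refine ⟨?_, hnest (l + 1) (by omega) (List.getElem?_eq_some_iff.1 hw).1⟩
    rcases z with a | a <;> rcases w with b | b
    · obtain ⟨h, h'⟩ := hXX (l + 1) a b (by omega) hz hw
      exact ⟨_, h, Prod.ext rfl h'⟩
    · obtain ⟨h, h'⟩ := hXY (l + 1) a b (by omega) hz hw
      exact ⟨_, h', Prod.ext h rfl⟩
    · obtain ⟨h, h'⟩ := hYX (l + 1) a b (by omega) hz hw
      exact ⟨_, h, Prod.ext rfl h'⟩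
    · obtain ⟨h, h'⟩ := hYY (l + 1) a b (by omega) hz hw
      exact ⟨_, h', Prod.ext h rfl⟩

theorem condensed_iff_condensedIn (u : List A) (r : List (RLetter A)) :
    Condensed u r ↔ CondensedIn u r (0, u.length + 1) := by
  constructor
  · rintro ⟨p, i, j, heval, hi, hj, hXX, hYY, hXY, hYX, hnest, hp⟩
    exact ⟨p, fun l => (i l, j l), evalR_eq_evalIn u r ▸ heval, Prod.ext hi hj,
      isIntervalChain_iff.2 ⟨hXX, hYY, hXY, hYX, hnest⟩, hp⟩
  · rintro ⟨p, I, heval, hI, hchain, hp⟩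
    obtain ⟨hXX, hYY, hXY, hYX, hnest⟩ := isIntervalChain_iff.1 hchain
    exact ⟨p, fun l => (I l).1, fun l => (I l).2, evalR_eq_evalIn u r ▸ heval,
      congrArg Prod.fst hI, congrArg Prod.snd hI, hXX, hYY, hXY, hYX, hnest, hp⟩

theorem condensedIn_singleton {u : List A} {z : RLetter A} {I₀ : ℕ × ℕ} :
    CondensedIn u [z] I₀ ↔ ∃ k, FindsIn u z I₀ k := by
  simp only [CondensedIn, FindsIn, evalIn_singleton]
  constructor
  · rintro ⟨p, I, heval, rfl, -, hp⟩
    exact ⟨p, heval, hp⟩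
  · rintro ⟨p, heval, hp⟩
    exact ⟨p, fun _ => I₀, heval, rfl, isIntervalChain_singleton u z _, hp⟩

theorem condensedIn_cons_cons_iff_strictlyInside {u : List A} {z w : RLetter A}
    {t : List (RLetter A)} {I₀ : ℕ × ℕ} :
    CondensedIn u (z :: w :: t) I₀ ↔
      ∃ k, stepR u z (z.origin I₀) = some k ∧ StrictlyInside (w.beyond I₀ k) I₀ ∧
        CondensedIn u (w :: t) (w.beyond I₀ k) := by
  constructor
  · rintro ⟨p, I, heval, rfl, hchain, hp⟩
    obtain ⟨⟨⟨k, hk, hI⟩, hinside⟩, htail⟩ := isIntervalChain_cons_cons.1 hchain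
    rw [evalIn_cons_cons, hk] at heval
    exact ⟨k, hk, hI ▸ hinside, p, fun l => I (l + 1), heval, hI, htail, hp⟩
  · rintro ⟨k, hk, hinside, p, I, heval, hI, htail, hp⟩
    rw [← hI] at hinside
    let J : ℕ → ℕ × ℕ
      | 0 => I₀
      | l + 1 => I l
    have hJ : IsIntervalChain u (z :: w :: t) J :=
      isIntervalChain_cons_cons.2 ⟨⟨⟨k, hk, hI⟩, hinside⟩, htail⟩
    refine ⟨p, J, ?_, rfl, hJ, hp⟩
    rw [evalIn_cons_cons, hk]
    exact heval

theorem CondensedIn.fst_lt_snd {u : List A} {r : List (RLetter A)} {I : ℕ × ℕ}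
    (h : CondensedIn u r I) : I.1 < I.2 := by
  match r with
  | [] => simp [CondensedIn, evalIn] at h
  | [z] =>
    obtain ⟨k, -, hk⟩ := condensedIn_singleton.1 h
    exact hk.1.trans hk.2
  | z :: w :: t =>
    obtain ⟨k, -, hinside, htail⟩ := condensedIn_cons_cons_iff_strictlyInside.1 h
    have hk := (mem_Ioo_iff_strictlyInside_beyond w).2 ⟨hinside, htail.fst_lt_snd⟩
    exact hk.1.trans hk.2

theorem condensedIn_cons_cons {u : List A} {z w : RLetter A} {t : List (RLetter A)}
    {I : ℕ × ℕ} :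
    CondensedIn u (z :: w :: t) I ↔
      ∃ k, FindsIn u z I k ∧ CondensedIn u (w :: t) (w.beyond I k) := by
  rw [condensedIn_cons_cons_iff_strictlyInside]
  refine exists_congr fun k => ?_
  rw [FindsIn, and_assoc]
  refine and_congr_right fun _ => and_congr_left fun htail => ?_
  rw [mem_Ioo_iff_strictlyInside_beyond w, and_iff_left htail.fst_lt_snd]

theorem findsIn_X_iff {u : List A} {a : A} {I : ℕ × ℕ} {k : ℕ} :
    FindsIn u (.X a) I k ↔ k ∈ Set.Ioo I.1 I.2 ∧ u[k - 1]? = some a ∧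
      ∀ m ∈ Set.Ioo I.1 k, u[m - 1]? ≠ some a := by
  simp only [FindsIn, stepR, RLetter.origin, nextOcc_eq_some_iff, Set.mem_Ioo]
  tauto

theorem findsIn_Y_iff {u : List A} {a : A} {I : ℕ × ℕ} {k : ℕ} :
    FindsIn u (.Y a) I k ↔ k ∈ Set.Ioo I.1 I.2 ∧ u[k - 1]? = some a ∧
      ∀ m ∈ Set.Ioo k I.2, u[m - 1]? ≠ some a := by
  have one_le : k ∈ Set.Ioo I.1 I.2 → 1 ≤ k := fun hk => Nat.one_le_of_lt hk.1
  simp only [FindsIn, stepR, RLetter.origin, prevOcc_eq_some_iff, Set.mem_Ioo] at one_le ⊢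
  tauto

theorem getElem?_append_append_add_length {α : Type*} (x v y : List α) {m : ℕ}
    (hm : m ∈ Set.Ioo 0 (v.length + 1)) :
    (x ++ v ++ y)[m + x.length - 1]? = v[m - 1]? := by
  grind

theorem forall_mem_Ioo_add {i j n : ℕ} {P : ℕ → Prop} :
    (∀ m ∈ Set.Ioo (i + n) (j + n), P m) ↔ ∀ m ∈ Set.Ioo i j, P (m + n) := by
  rw [← Set.image_add_const_Ioo, Set.forall_mem_image]

theorem findsIn_factor_iff (x v y : List A) {z : RLetter A} {I : ℕ × ℕ} {k : ℕ}
    (hI : I.2 ≤ v.length + 1) :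
    FindsIn (x ++ v ++ y) z (I + (x.length, x.length)) (k + x.length) ↔ FindsIn v z I k := by
  have getElem?_eq {m : ℕ} (h₁ : I.1 < m) (h₂ : m < I.2) :
      (x ++ v ++ y)[m + x.length - 1]? = v[m - 1]? :=
    getElem?_append_append_add_length x v y ⟨by omega, by omega⟩
  have hmem : k + x.length ∈ Set.Ioo (I.1 + x.length) (I.2 + x.length) ↔ k ∈ Set.Ioo I.1 I.2 := by
    simp
  rcases z with a | a
  · simp only [findsIn_X_iff, Prod.fst_add, Prod.snd_add, hmem, forall_mem_Ioo_add]
    refine and_congr_right fun hk => ?_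
    rw [getElem?_eq hk.1 hk.2]
    exact and_congr_right fun _ => forall₂_congr fun m hm => by
      rw [getElem?_eq hm.1 (hm.2.trans hk.2)]
  · simp only [findsIn_Y_iff, Prod.fst_add, Prod.snd_add, hmem, forall_mem_Ioo_add]
    refine and_congr_right fun hk => ?_
    rw [getElem?_eq hk.1 hk.2]
    exact and_congr_right fun _ => forall₂_congr fun m hm => by
      rw [getElem?_eq (hk.1.trans hm.1) hm.2]

theorem exists_findsIn_factor_iff (x v y : List A) {z : RLetter A} {I : ℕ × ℕ} {P : ℕ → Prop}
    (hI : I.2 ≤ v.length + 1) :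
    (∃ k, FindsIn (x ++ v ++ y) z (I + (x.length, x.length)) k ∧ P k) ↔
      ∃ k, FindsIn v z I k ∧ P (k + x.length) := by
  constructor
  · rintro ⟨k, hk, hP⟩
    obtain ⟨k, rfl⟩ := Nat.exists_eq_add_of_le' ((Nat.le_add_left _ _).trans hk.2.1.le)
    exact ⟨k, (findsIn_factor_iff x v y hI).1 hk, hP⟩
  · rintro ⟨k, hk, hP⟩
    exact ⟨k + x.length, (findsIn_factor_iff x v y hI).2 hk, hP⟩

theorem condensedIn_add_length_iff (x v y : List A) {r : List (RLetter A)} {I : ℕ × ℕ}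
    (hI : I.2 ≤ v.length + 1) :
    CondensedIn (x ++ v ++ y) r (I + (x.length, x.length)) ↔ CondensedIn v r I := by
  match r with
  | [] => simp [CondensedIn, evalIn]
  | [z] =>
    simpa only [condensedIn_singleton, and_true] using
      exists_findsIn_factor_iff x v y (P := fun _ => True) hI
  | z :: w :: t =>
    rw [condensedIn_cons_cons, condensedIn_cons_cons, exists_findsIn_factor_iff x v y hI]
    refine exists_congr fun k => and_congr_right fun hk => ?_
    obtain ⟨⟨-, hbeyond, -⟩, -⟩ := (mem_Ioo_iff_strictlyInside_beyond w).1 hk.2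
    rw [RLetter.beyond_add, condensedIn_add_length_iff x v y (hbeyond.trans hI)]

theorem condensedIn_factor_iff_condensed (x v y : List A) {r : List (RLetter A)} :
    CondensedIn (x ++ v ++ y) r (x.length, x.length + (v.length + 1)) ↔ Condensed v r := by
  rw [condensed_iff_condensedIn, ← condensedIn_add_length_iff x v y le_rfl, Prod.mk_add_mk,
    zero_add, Nat.add_comm x.length]

theorem findsIn_X_append_cons {um up : List A} {a : A} (ha : a ∉ um) :
    FindsIn (um ++ a :: up) (.X a) (0, (um ++ a :: up).length + 1) (um.length + 1) := by
  refine findsIn_X_iff.2 ⟨by simp, by simp, fun m hm hma => ha ?_⟩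
  rw [List.getElem?_append_left (by grind)] at hma
  exact List.mem_of_getElem? hma

theorem findsIn_Y_append_cons {um up : List A} {a : A} (ha : a ∉ up) :
    FindsIn (um ++ a :: up) (.Y a) (0, (um ++ a :: up).length + 1) (um.length + 1) := by
  refine findsIn_Y_iff.2 ⟨by simp, by simp, fun m hm hma => ha ?_⟩
  obtain ⟨l, rfl⟩ : ∃ l, m = um.length + 2 + l := Nat.exists_eq_add_of_le hm.1
  exact List.mem_of_getElem? (i := l) (by grind)

theorem condensed_cons_cons_iff_of_findsIn {u : List A} {z w : RLetter A} {t : List (RLetter A)}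
    {k : ℕ} (hk : FindsIn u z (0, u.length + 1) k) :
    Condensed u (z :: w :: t) ↔ CondensedIn u (w :: t) (w.beyond (0, u.length + 1) k) := by
  rw [condensed_iff_condensedIn, condensedIn_cons_cons]
  constructor
  · rintro ⟨k', hk', h⟩
    rwa [Option.some_injective _ (hk.1.symm.trans hk'.1)]
  · exact fun h => ⟨k, hk, h⟩

theorem condensed_append_cons_X_iff_right {um up : List A} {a b : A} {z : RLetter A}
    {t : List (RLetter A)}
    (hz : FindsIn (um ++ a :: up) z (0, (um ++ a :: up).length + 1) (um.length + 1)) :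
    Condensed (um ++ a :: up) (z :: .X b :: t) ↔ Condensed up (.X b :: t) := by
  rw [condensed_cons_cons_iff_of_findsIn hz,
    ← condensedIn_factor_iff_condensed (um ++ [a]) up []]
  simp [RLetter.beyond, Nat.add_assoc, Nat.add_comm 1]

theorem condensed_append_cons_Y_iff_left {um up : List A} {a b : A} {z : RLetter A}
    {t : List (RLetter A)}
    (hz : FindsIn (um ++ a :: up) z (0, (um ++ a :: up).length + 1) (um.length + 1)) :
    Condensed (um ++ a :: up) (z :: .Y b :: t) ↔ Condensed um (.Y b :: t) := by
  rw [condensed_cons_cons_iff_of_findsIn hz, ← condensedIn_factor_iff_condensed [] um (a :: up)]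
  simp [RLetter.beyond]

/-- Condensed rankers and `a`-left/right factorizations. -/
theorem statement1 (a : A) (s : List (RLetter A)) (hs : s ≠ []) :
    (∀ um up : List A, a ∉ um →
      ((∀ (b : A) (t : List (RLetter A)), s = RLetter.X b :: t →
          (Condensed (um ++ a :: up) (RLetter.X a :: s) ↔ Condensed up s)) ∧
       (∀ (b : A) (t : List (RLetter A)), s = RLetter.Y b :: t →
          (Condensed (um ++ a :: up) (RLetter.X a :: s) ↔ Condensed um s)))) ∧
    (∀ um up : List A, a ∉ up →
      ((∀ (b : A) (t : List (RLetter A)), s = RLetter.Y b :: t →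
          (Condensed (um ++ a :: up) (RLetter.Y a :: s) ↔ Condensed um s)) ∧
       (∀ (b : A) (t : List (RLetter A)), s = RLetter.X b :: t →
          (Condensed (um ++ a :: up) (RLetter.Y a :: s) ↔ Condensed up s)))) := by
  refine ⟨fun um up ha => ⟨?_, ?_⟩, fun um up ha => ⟨?_, ?_⟩⟩
  · rintro b t rfl
    exact condensed_append_cons_X_iff_right (findsIn_X_append_cons ha)
  · rintro b t rfl
    exact condensed_append_cons_Y_iff_left (findsIn_X_append_cons ha)
  · rintro b t rfl
    exact condensed_append_cons_Y_iff_left (findsIn_Y_append_cons ha)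
  · rintro b t rfl
    exact condensed_append_cons_X_iff_right (findsIn_Y_append_cons ha)

end RankerPaper
end
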